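/- Let (c_k)_{k=0}^{m} be the spherical coordinate functions on S^m (c₀ = sin θ ∏_{j<m} sin φ_j, c₁ = cos θ ∏_{j<m} sin φ_j, c_k = cos φ_{k−1} ∏_{j=k}^{m−1} sin φ_j for 2 ≤ k ≤ m). Let f : Λ → ℝ^{2n+1} be a smooth embedding of a compact manifold with first coordinate x₁(p) > 0 for all p. Then the map F : Λ × S^m → ℝ^{2(n+m)+1} given by F(p, u) = (x₁(p)·c₀(u), y₁(p)·c₀(u), …, x₁(p)·c_m(u), y₁(p)·c_m(u), x₂(p), y₂(p), …, x_n(p), y_n(p), z(p)) is injective. -/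

import Mathlib

/-! In polar coordinates `(r, u) ↦ r • u` with `r > 0`, the vector `x₁(p) • u` determines both
the radius `x₁(p)` and the direction `u`. Since `u ≠ 0`, the vector `y₁(p) • u` then determines
`y₁(p)`. The other coordinates of `f p` occur unchanged in the spun map, so `f p` is recovered. -/

open Metric

section Intrinsic

variable {E : Type*} [NormedAddCommGroup E] [NormedSpace ℝ E]

theorem eq_and_eq_of_pos_smul_eq_pos_smul {r s : ℝ} {u v : sphere (0 : E) 1}
    (hr : 0 < r) (hs : 0 < s) (h : r • (u : E) = s • (v : E)) : r = s ∧ u = v := by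
  have polar : (u, (⟨r, hr⟩ : Set.Ioi (0 : ℝ))) = (v, ⟨s, hs⟩) :=
    (homeomorphUnitSphereProd E).symm.injective (Subtype.ext h)
  exact ⟨congrArg (fun a ↦ (a.2 : ℝ)) polar, congrArg Prod.fst polar⟩

/-- The front spinning of the map `(x, y, w)` by the unit sphere of `E`, without coordinates:
the families `(x₁ c_k)` and `(y₁ c_k)` become the vectors `x p • u` and `y p • u`, and `w`
stands for the coordinates that are not spun. -/
def frontSpin {Λ W : Type*} (x y : Λ → ℝ) (w : Λ → W) (a : Λ × sphere (0 : E) 1) : E × E × W :=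
  (x a.1 • (a.2 : E), y a.1 • (a.2 : E), w a.1)

theorem frontSpin_injective {Λ W : Type*} {x y : Λ → ℝ} {w : Λ → W} (hx : ∀ p, 0 < x p)
    (hxyw : Function.Injective fun p ↦ (x p, y p, w p)) :
    Function.Injective (frontSpin (E := E) x y w) := by
  rintro ⟨p, u⟩ ⟨q, v⟩ h
  simp only [frontSpin, Prod.mk.injEq] at h
  obtain ⟨hxu, hyu, hw⟩ := h
  obtain ⟨hxpq, rfl⟩ := eq_and_eq_of_pos_smul_eq_pos_smul (hx p) (hx q) hxu
  have hypq : y p = y q := smul_left_injective ℝ (ne_zero_of_mem_unit_sphere u) hyu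
  have hpq : p = q := hxyw (by simp only [hxpq, hypq, hw])
  rw [hpq]

end Intrinsic

theorem injective_zero_one_restrict {α : Type*} {N : ℕ} (hN : 1 < N) :
    Function.Injective fun g : Fin N → α ↦
      (g ⟨0, by omega⟩, g ⟨1, hN⟩, fun j : {j : Fin N // 2 ≤ (j : ℕ)} ↦ g j) := by
  intro g g' h
  simp only [Prod.mk.injEq] at h
  obtain ⟨h_zero, h_one, h_tail⟩ := h
  ext ⟨j, hj⟩
  match j with
  | 0 => exact h_zero
  | 1 => exact h_one
  | j + 2 => exact congrFun h_tail ⟨⟨j + 2, hj⟩, by simp⟩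

theorem spun_map_injective_general {n m : ℕ} (hn : 0 < n) {Λ : Type*}
    {f : Λ → EuclideanSpace ℝ (Fin (2 * n + 1))}
    (hf : Function.Injective f)
    (hx : ∀ p, 0 < f p 0)
    {F : Λ × sphere (0 : EuclideanSpace ℝ (Fin (m + 1))) 1 →
      Fin (2 * (n + m) + 1) → ℝ}
    (hF : ∀ (p : Λ) (u : sphere (0 : EuclideanSpace ℝ (Fin (m + 1))) 1)
        (i : Fin (2 * (n + m) + 1)),
      F (p, u) i =
        if h : (i : ℕ) < 2 * (m + 1) then
          (if (i : ℕ) % 2 = 0 then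
            f p 0 * u.1 ⟨(i : ℕ) / 2, Nat.div_lt_of_lt_mul h⟩
          else
            f p ⟨1, by omega⟩ * u.1 ⟨(i : ℕ) / 2, Nat.div_lt_of_lt_mul h⟩)
        else f p ⟨(i : ℕ) - 2 * m, by omega⟩) :
    Function.Injective F := by
  have even_coord (a) (k : Fin (m + 1)) :
      F a ⟨2 * k, by omega⟩ = f a.1 0 * a.2.1 k := by
    have hk : 2 * (k : ℕ) < 2 * (m + 1) := by omega
    simp [hF, hk]
  have odd_coord (a) (k : Fin (m + 1)) :
      F a ⟨2 * k + 1, by omega⟩ = f a.1 ⟨1, by omega⟩ * a.2.1 k := by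
    have hk : 2 * (k : ℕ) + 1 < 2 * (m + 1) := by omega
    have hdiv : (2 * (k : ℕ) + 1) / 2 = k := by omega
    simp [hF, hk, hdiv]
  have unspun_coord (a) (j : {j : Fin (2 * n + 1) // 2 ≤ (j : ℕ)}) :
      F a ⟨j + 2 * m, by omega⟩ = f a.1 j := by
    have hj : ¬ (j : ℕ) + 2 * m < 2 * (m + 1) := by have := j.2; omega
    simp [hF, hj]
  have hf_blocks :=
    (injective_zero_one_restrict (by omega)).comp ((WithLp.ofLp_injective 2).comp hf)
  intro a b hab
  apply frontSpin_injective hx hf_blocks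
  refine Prod.ext ?_ (Prod.ext ?_ ?_)
  · ext k
    simpa [frontSpin, even_coord] using congrFun hab ⟨2 * k, by omega⟩
  · ext k
    simpa [frontSpin, odd_coord] using congrFun hab ⟨2 * k + 1, by omega⟩
  · ext j
    simpa [frontSpin, unspun_coord] using congrFun hab ⟨j + 2 * m, by omega⟩

/-- Embeddedness of the front `S^m`-spinning: given an embedding
`f = (x₁, y₁, …, x_n, y_n, z) : Λ → ℝ^{2n+1}` of a compact manifold with `x₁ > 0`, the
spun map `F(p, u) = (x₁(p)c₀(u), y₁(p)c₀(u), …, x₁(p)c_m(u), y₁(p)c_m(u), x₂(p), …, z(p))`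
on `Λ × S^m` is injective, where `c₀, …, c_m` are the coordinate functions of the unit
sphere `S^m ⊂ ℝ^{m+1}` (so that `∑ c_k² = 1`). -/
theorem spun_map_injective (n m : ℕ) (hn : 1 ≤ n) (hm : 1 ≤ m)
    (Λ : Type) [TopologicalSpace Λ] [CompactSpace Λ]
    (f : Λ → EuclideanSpace ℝ (Fin (2 * n + 1)))
    (hf : Topology.IsEmbedding f)
    (hx : ∀ p, 0 < f p ⟨0, by omega⟩)
    (F : Λ × Metric.sphere (0 : EuclideanSpace ℝ (Fin (m + 1))) 1 →
      Fin (2 * (n + m) + 1) → ℝ)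
    (hF : ∀ (p : Λ) (u : Metric.sphere (0 : EuclideanSpace ℝ (Fin (m + 1))) 1)
        (i : Fin (2 * (n + m) + 1)),
      F (p, u) i =
        if h : (i : ℕ) < 2 * (m + 1) then
          (if (i : ℕ) % 2 = 0 then
            f p ⟨0, by omega⟩ * u.1 ⟨(i : ℕ) / 2, by omega⟩
          else
            f p ⟨1, by omega⟩ * u.1 ⟨(i : ℕ) / 2, by omega⟩)
        else f p ⟨(i : ℕ) - 2 * m, by have := i.isLt; omega⟩) :
    Function.Injective F := by
  exact spun_map_injective_general hn hf.injective hx hF
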